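/- Every semi-universally flexible loop with the inverse property is alternative: if Q is an SUF IP loop, then x·(x·y) = (x·x)·y and (x·y)·y = x·(y·y) for all x, y ∈ Q. -/

import Mathlib

/-- A loop `(Q, ·, \, /, 1)`: `mul x y = x·y`, `ld x y = x\y`, `rd x y = x/y`. -/
structure LoopStr (Q : Type*) where
  mul : Q → Q → Q
  ld : Q → Q → Q
  rd : Q → Q → Q
  one : Q
  ld_mul : ∀ x y, ld x (mul x y) = y
  rd_mul : ∀ x y, rd (mul y x) x = y
  mul_ld : ∀ x y, mul x (ld x y) = y
  mul_rd : ∀ x y, mul (rd y x) x = y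
  one_mul : ∀ x, mul one x = x
  mul_one : ∀ x, mul x one = x

/-!
Over an IP loop, left semi-universal flexibility reads `(xu·z)u·x = xu·(zu·x)` without division.
Two substitutions in its case `z = 1` give `(xu·xu⁻¹)u = x·ux`, and the case `z = xu⁻¹` then becomes
`xu·xx = x(ux·x)`. Inversion is an antiautomorphism, so the mirror image `xx·yx = (x·xy)x` holds as
well; it evaluates the right-hand side of the case `u = x`, and cancelling `x` twice on the right
leaves `xx·y = x·xy`.
-/

/-- Flexibility `x(yx) = (xy)x`, for a bare binary operation so that it applies to a loop and to
its isotopes alike. -/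
def IsFlexible {Q : Type*} (m : Q → Q → Q) : Prop :=
  ∀ x y, m x (m y x) = m (m x y) x

namespace LoopStr

variable {Q : Type*} {L : LoopStr Q} {inv : Q → Q}

/-- The multiplication `x ∘ y = (x/u)·y` of the left principal isotope of `L` at `u`. -/
def leftIsotope (L : LoopStr Q) (u x y : Q) : Q :=
  L.mul (L.rd x u) y

/-- Left semi-universal flexibility: every left principal isotope is flexible. -/
def IsLeftSUF (L : LoopStr Q) : Prop :=
  ∀ u, IsFlexible (L.leftIsotope u)

/-- The inverse property of `L`, with `inv` as the two-sided inversion map. -/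
structure IsInverseProperty (L : LoopStr Q) (inv : Q → Q) : Prop where
  inv_mul_cancel_left : ∀ x y, L.mul (inv x) (L.mul x y) = y
  mul_inv_cancel_right : ∀ x y, L.mul (L.mul x y) (inv y) = x

local infixl:70 " ⬝ " => LoopStr.mul L

theorem mul_right_cancel {x y z : Q} (h : y ⬝ x = z ⬝ x) : y = z := by
  rw [← L.rd_mul x y, h, L.rd_mul]

theorem rd_one (x : Q) : L.rd x L.one = x := by
  simpa only [L.mul_one] using L.rd_mul L.one x

theorem leftIsotope_one : L.leftIsotope L.one = L.mul := by
  funext x y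
  rw [leftIsotope, rd_one]

theorem IsLeftSUF.isFlexible (suf : L.IsLeftSUF) : IsFlexible L.mul :=
  leftIsotope_one (L := L) ▸ suf L.one

namespace IsInverseProperty

theorem inv_mul_self (ip : L.IsInverseProperty inv) (x : Q) : inv x ⬝ x = L.one := by
  simpa only [L.mul_one] using ip.inv_mul_cancel_left x L.one

theorem inv_inv (ip : L.IsInverseProperty inv) (x : Q) : inv (inv x) = x := by
  simpa only [ip.inv_mul_self, L.mul_one] using ip.inv_mul_cancel_left (inv x) x

theorem inv_mul_cancel_right (ip : L.IsInverseProperty inv) (x y : Q) : x ⬝ inv y ⬝ y = x := by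
  simpa only [ip.inv_inv] using ip.mul_inv_cancel_right x (inv y)

theorem mul_inv_rev (ip : L.IsInverseProperty inv) (x y : Q) :
    inv (x ⬝ y) = inv y ⬝ inv x := by
  have h : y ⬝ inv (x ⬝ y) = inv x := by
    simpa only [ip.inv_mul_cancel_left] using ip.mul_inv_cancel_right (inv x) (x ⬝ y)
  rw [← h, ip.inv_mul_cancel_left]

theorem rd_eq_mul_inv (ip : L.IsInverseProperty inv) (x y : Q) : L.rd x y = x ⬝ inv y := by
  simpa only [ip.inv_mul_cancel_right] using L.rd_mul y (x ⬝ inv y)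

theorem mul_mul_inv_of_isFlexible (ip : L.IsInverseProperty inv) (flex : IsFlexible L.mul)
    (x y : Q) : x ⬝ y ⬝ inv x = x ⬝ (y ⬝ inv x) := by
  apply mul_right_cancel (L := L) (x := x)
  rw [ip.inv_mul_cancel_right, ← flex, ip.inv_mul_cancel_right]

theorem right_alternative_of_left_alternative (ip : L.IsInverseProperty inv)
    (alt : ∀ x y, x ⬝ (x ⬝ y) = x ⬝ x ⬝ y) (x y : Q) : x ⬝ y ⬝ y = x ⬝ (y ⬝ y) := by
  simpa only [ip.mul_inv_rev, ip.inv_inv] using congrArg inv (alt (inv y) (inv x))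

end IsInverseProperty

namespace IsLeftSUF

theorem mul_mul_mul_mul_assoc (suf : L.IsLeftSUF) (ip : L.IsInverseProperty inv) (x u y : Q) :
    x ⬝ u ⬝ y ⬝ u ⬝ x = x ⬝ u ⬝ (y ⬝ u ⬝ x) := by
  simpa only [leftIsotope, ip.rd_eq_mul_inv, ip.inv_inv] using (suf (inv u) x y).symm

theorem mul_mul_mul_assoc (suf : L.IsLeftSUF) (ip : L.IsInverseProperty inv) (x y : Q) :
    x ⬝ y ⬝ y ⬝ x = x ⬝ y ⬝ (y ⬝ x) := by
  simpa only [L.mul_one, L.one_mul] using suf.mul_mul_mul_mul_assoc ip x y L.one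

theorem mul_mul_mul_inv_mul (suf : L.IsLeftSUF) (ip : L.IsInverseProperty inv) (x y : Q) :
    x ⬝ y ⬝ (x ⬝ inv y) ⬝ y = x ⬝ (y ⬝ x) := by
  have expand_left : x ⬝ y ⬝ (x ⬝ inv y) = x ⬝ (y ⬝ (x ⬝ inv y)) := by
    simpa only [ip.inv_mul_cancel_right] using suf.mul_mul_mul_assoc ip (x ⬝ inv y) y
  have expand_right : x ⬝ (y ⬝ x) ⬝ inv y = x ⬝ (y ⬝ x ⬝ inv y) := by
    simpa only [ip.inv_mul_cancel_left] using suf.mul_mul_mul_assoc ip (inv y) (y ⬝ x)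
  rw [expand_left, ← ip.mul_mul_inv_of_isFlexible suf.isFlexible, ← expand_right,
    ip.inv_mul_cancel_right]

theorem mul_mul_mul_self (suf : L.IsLeftSUF) (ip : L.IsInverseProperty inv) (x y : Q) :
    x ⬝ y ⬝ (x ⬝ x) = x ⬝ (y ⬝ x ⬝ x) :=
  calc
    x ⬝ y ⬝ (x ⬝ x) = x ⬝ y ⬝ (x ⬝ inv y ⬝ y ⬝ x) := by rw [ip.inv_mul_cancel_right]
    _ = x ⬝ y ⬝ (x ⬝ inv y) ⬝ y ⬝ x := (suf.mul_mul_mul_mul_assoc ip x y (x ⬝ inv y)).symm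
    _ = x ⬝ (y ⬝ x) ⬝ x := by rw [suf.mul_mul_mul_inv_mul ip]
    _ = x ⬝ (y ⬝ x ⬝ x) := (suf.isFlexible x (y ⬝ x)).symm

theorem mul_self_mul_mul (suf : L.IsLeftSUF) (ip : L.IsInverseProperty inv) (x y : Q) :
    x ⬝ x ⬝ (y ⬝ x) = x ⬝ (x ⬝ y) ⬝ x := by
  simpa only [ip.mul_inv_rev, ip.inv_inv] using
    congrArg inv (suf.mul_mul_mul_self ip (inv x) (inv y))

theorem left_alternative (suf : L.IsLeftSUF) (ip : L.IsInverseProperty inv) (x y : Q) :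
    x ⬝ (x ⬝ y) = x ⬝ x ⬝ y := by
  have flex := suf.isFlexible
  have h : x ⬝ x ⬝ y ⬝ x ⬝ x = x ⬝ (x ⬝ y) ⬝ x ⬝ x :=
    calc
      x ⬝ x ⬝ y ⬝ x ⬝ x = x ⬝ x ⬝ (y ⬝ x ⬝ x) := suf.mul_mul_mul_mul_assoc ip x x y
      _ = x ⬝ (x ⬝ (y ⬝ x)) ⬝ x := suf.mul_self_mul_mul ip x (y ⬝ x)
      _ = x ⬝ (x ⬝ y ⬝ x) ⬝ x := by rw [flex x y]
      _ = x ⬝ (x ⬝ y) ⬝ x ⬝ x := by rw [flex x (x ⬝ y)]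
  exact (mul_right_cancel (mul_right_cancel h)).symm

end IsLeftSUF

end LoopStr

theorem suf_ip_alternative_general {Q : Type*} {L : LoopStr Q} {inv : Q → Q}
    (ip : L.IsInverseProperty inv) (suf : L.IsLeftSUF) (x y : Q) :
    L.mul x (L.mul x y) = L.mul (L.mul x x) y ∧ L.mul (L.mul x y) y = L.mul x (L.mul y y) :=
  ⟨suf.left_alternative ip x y,
    ip.right_alternative_of_left_alternative (suf.left_alternative ip) x y⟩

/-- Every semi-universally flexible IP loop is alternative. -/
theorem suf_ip_alternative {Q : Type*} (L : LoopStr Q) (inv : Q → Q)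
    (lip : ∀ x y, L.mul (inv x) (L.mul x y) = y)
    (rip : ∀ x y, L.mul (L.mul y x) (inv x) = y)
    (lsuf : ∀ x y u,
      L.mul (L.rd x u) (L.mul (L.rd y u) x)
        = L.mul (L.rd (L.mul (L.rd x u) y) u) x)
    (rsuf : ∀ x y v,
      L.mul x (L.ld v (L.mul y (L.ld v x)))
        = L.mul (L.mul x (L.ld v y)) (L.ld v x)) :
    ∀ x y, L.mul x (L.mul x y) = L.mul (L.mul x x) y
      ∧ L.mul (L.mul x y) y = L.mul x (L.mul y y) :=
  suf_ip_alternative_general ⟨lip, fun x y => rip y x⟩ fun u x y => lsuf x y u
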